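/- Let g:(ℝ,0)→(ℝ^4,0) be the curve-germ g(t) = (t^4,t^5,t^6,t^7). (i) For all real numbers c_1≠0 and c_2, there exist germs of diffeomorphisms Φ:(ℝ^4,0)→(ℝ^4,0) and φ:(ℝ,0)→(ℝ,0) with Φ∘g = g∘φ near 0 such that the pullback Φ^*(dx_2∧dx_3 − (3/2)dx_1∧dx_4 + c_1·dx_2∧dx_4 + c_2·dx_3∧dx_4) and the 2-form dx_2∧dx_3 − (3/2)dx_1∧dx_4 + c_1·dx_2∧dx_4 have the same algebraic restriction to g. (ii) For every sign ε∈{+1,−1} and all real numbers c_1≠0, c_2, c_3, there exist germs of diffeomorphisms Φ:(ℝ^4,0)→(ℝ^4,0) and φ:(ℝ,0)→(ℝ,0) with Φ∘g = g∘φ near 0 such that Φ^*(ε·dx_1∧dx_3 + c_1·dx_1∧dx_4 + c_2·dx_2∧dx_4 + c_3·dx_3∧dx_4) and ε·dx_1∧dx_3 + c_1·dx_1∧dx_4 + c_2·dx_2∧dx_4 have the same algebraic restriction to g. -/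

import Mathlib

open Filter Topology

noncomputable section

/-- A (set-theoretic) differential 1-form on `ℝ^m`: a map assigning to each point a
function on tangent vectors. -/
def Form1 (m : ℕ) := (Fin m → ℝ) → (Fin m → ℝ) → ℝ

/-- A (set-theoretic) differential 2-form on `ℝ^m`. -/
def Form2 (m : ℕ) := (Fin m → ℝ) → (Fin m → ℝ) → (Fin m → ℝ) → ℝ

/-- A germ at `0` of a smooth differential 1-form: pointwise linear in the tangent
vector, and with coefficients smooth on a neighbourhood of `0`. -/
def IsForm1 (m : ℕ) (β : Form1 m) : Prop :=
  (∀ x u₁ u₂ (c : ℝ), β x (u₁ + c • u₂) = β x u₁ + c * β x u₂) ∧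
  (∀ u, ∃ U ∈ 𝓝 (0 : Fin m → ℝ), ContDiffOn ℝ (⊤ : ℕ∞) (fun x => β x u) U)

/-- A germ at `0` of a smooth differential 2-form: pointwise bilinear and alternating
in the tangent vectors, with coefficients smooth on a neighbourhood of `0`. -/
def IsForm2 (m : ℕ) (ω : Form2 m) : Prop :=
  (∀ x u₁ u₂ v (c : ℝ), ω x (u₁ + c • u₂) v = ω x u₁ v + c * ω x u₂ v) ∧
  (∀ x u v, ω x u v = - ω x v u) ∧
  (∀ u v, ∃ U ∈ 𝓝 (0 : Fin m → ℝ), ContDiffOn ℝ (⊤ : ℕ∞) (fun x => ω x u v) U)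

/-- The exterior derivative of a 1-form, evaluated on a pair of (constant) vectors. -/
def extD1 (m : ℕ) (β : Form1 m) : Form2 m :=
  fun x u v => fderiv ℝ (fun y => β y v) x u - fderiv ℝ (fun y => β y u) x v

/-- The exterior derivative of a 2-form, evaluated on a triple of (constant) vectors. -/
def extD2 (m : ℕ) (ω : Form2 m) (x u v w : Fin m → ℝ) : ℝ :=
  fderiv ℝ (fun y => ω y v w) x u - fderiv ℝ (fun y => ω y u w) x v
    + fderiv ℝ (fun y => ω y u v) x w

/-- A 2-form is closed near `0` if its exterior derivative vanishes near `0`. -/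
def Closed2 (m : ℕ) (ω : Form2 m) : Prop :=
  ∀ᶠ x in 𝓝 (0 : Fin m → ℝ), ∀ u v w, extD2 m ω x u v w = 0

/-- A 1-form vanishes on the image of a curve-germ. -/
def VanishesOn1 (m : ℕ) (β : Form1 m) (f : ℝ → (Fin m → ℝ)) : Prop :=
  ∀ᶠ t in 𝓝 (0 : ℝ), ∀ u, β (f t) u = 0

/-- A 2-form vanishes on the image of a curve-germ. -/
def VanishesOn2 (m : ℕ) (ω : Form2 m) (f : ℝ → (Fin m → ℝ)) : Prop :=
  ∀ᶠ t in 𝓝 (0 : ℝ), ∀ u v, ω (f t) u v = 0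

/-- A 2-form `ω` has zero algebraic restriction to the curve-germ `f` if `ω = α + dβ`
near `0` for a smooth 2-form `α` and a smooth 1-form `β` both vanishing on `im f`. -/
def ZeroAR2 (m : ℕ) (ω : Form2 m) (f : ℝ → (Fin m → ℝ)) : Prop :=
  ∃ (α : Form2 m) (β : Form1 m), IsForm2 m α ∧ IsForm1 m β ∧
    VanishesOn2 m α f ∧ VanishesOn1 m β f ∧
    ∀ᶠ x in 𝓝 (0 : Fin m → ℝ), ∀ u v, ω x u v = α x u v + extD1 m β x u v

/-- Two 2-forms have the same algebraic restriction to `f` if their difference has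
zero algebraic restriction to `f`. -/
def SameAR2 (m : ℕ) (ω₁ ω₂ : Form2 m) (f : ℝ → (Fin m → ℝ)) : Prop :=
  ZeroAR2 m (fun x u v => ω₁ x u v - ω₂ x u v) f

/-- The pullback of a 2-form by a (germ of) smooth map. -/
def pull2 (m : ℕ) (Φ : (Fin m → ℝ) → (Fin m → ℝ)) (ω : Form2 m) : Form2 m :=
  fun x u v => ω (Φ x) (fderiv ℝ Φ x u) (fderiv ℝ Φ x v)

/-- A germ of diffeomorphism of `(ℝ,0)`. -/
def IsDiffeoGerm1 (φ : ℝ → ℝ) : Prop :=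
  φ 0 = 0 ∧ (∃ U ∈ 𝓝 (0 : ℝ), ContDiffOn ℝ (⊤ : ℕ∞) φ U) ∧ deriv φ 0 ≠ 0

/-- A germ of diffeomorphism of `(ℝ^m,0)`. -/
def IsDiffeoGerm (m : ℕ) (Φ : (Fin m → ℝ) → (Fin m → ℝ)) : Prop :=
  Φ 0 = 0 ∧ (∃ U ∈ 𝓝 (0 : Fin m → ℝ), ContDiffOn ℝ (⊤ : ℕ∞) Φ U) ∧
    ∃ D : (Fin m → ℝ) ≃L[ℝ] (Fin m → ℝ),
      HasFDerivAt Φ (D : (Fin m → ℝ) →L[ℝ] (Fin m → ℝ)) 0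

/-- The constant 2-form `dxᵢ ∧ dxⱼ` on `ℝ^m` (indices `0`-based). -/
def wedge (m : ℕ) (i j : Fin m) : Form2 m := fun _ u v => u i * v j - u j * v i

/-- The 2-form `x_l · dxᵢ ∧ dxⱼ` on `ℝ^m` (indices `0`-based). -/
def mwedge (m : ℕ) (l i j : Fin m) : Form2 m :=
  fun x u v => x l * (u i * v j - u j * v i)

/-- The monomial curve `g(t) = (t⁴,t⁵,t⁶,t⁷)`. -/
def g4567 : ℝ → (Fin 4 → ℝ) := fun t => ![t^4, t^5, t^6, t^7]

/-!
The form `Φ^*ω₁ - ω₂` has a polynomial primitive, and it has zero algebraic restriction to the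
curve as soon as this primitive agrees along the curve with the differential of a function `H`.
Multiplying the `k`-th component of a 1-form by `x_k` turns the restriction to the curve of the
differential of a monomial `x ^ s` into `s t ^ d`, where `d` is the weight of `s`. In degree `d`
the primitive is therefore exact along the curve when its coefficient vector lies in the span of
the exponent vectors of weight `d`. These span `ℝ ^ 4` for `d ≥ 16`, so only the degrees `8, …,
15` carry obstructions.

A reparametrization `t ↦ t + a₁ t² + a₂ t³ + ⋯` extends to a symmetry of the curve by writing each
power of `t` as a monomial in the coordinates. The obstructions in degrees up to `12` vanish or
say that the two forms agree there; those in degrees `13`, `14` and `15` form a triangular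
polynomial system in the `aᵢ`, solvable because `c₁ ≠ 0`.
-/

section PrimitiveForms

variable {m : ℕ}

/-- The 2-form `∑ᵢⱼ Aᵢⱼ dxᵢ ∧ dxⱼ` with constant coefficients; `A` is not assumed
antisymmetric. -/
def constForm (A : Matrix (Fin m) (Fin m) ℝ) : Form2 m :=
  fun x u v => ∑ i, ∑ j, A i j * wedge m i j x u v

/-- The 1-form `∑ᵢⱼ Aᵢⱼ Φᵢ dΦⱼ`, a primitive of the pullback of `constForm A` by `Φ`. -/
def pullPrimitive (A : Matrix (Fin m) (Fin m) ℝ) (Φ : (Fin m → ℝ) → (Fin m → ℝ)) : Form1 m :=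
  fun x u => ∑ i, ∑ j, A i j * (Φ x i * fderiv ℝ Φ x u j)

lemma pull2_id (ω : Form2 m) : pull2 m id ω = ω := by
  funext x u v
  simp [pull2]

lemma contDiff_fderiv_const_apply {E F : Type*} [NormedAddCommGroup E] [NormedSpace ℝ E]
    [NormedAddCommGroup F] [NormedSpace ℝ F] {f : E → F} (hf : ContDiff ℝ (⊤ : ℕ∞) f) (u : E) :
    ContDiff ℝ (⊤ : ℕ∞) fun x => fderiv ℝ f x u :=
  (hf.fderiv_right (m := (⊤ : ℕ∞)) (by simp)).clm_apply contDiff_const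

lemma contDiff_pullPrimitive (A : Matrix (Fin m) (Fin m) ℝ) {Φ : (Fin m → ℝ) → (Fin m → ℝ)}
    (hΦ : ContDiff ℝ (⊤ : ℕ∞) Φ) (u : Fin m → ℝ) :
    ContDiff ℝ (⊤ : ℕ∞) fun x => pullPrimitive A Φ x u := by
  have := contDiff_fderiv_const_apply hΦ u
  unfold pullPrimitive
  fun_prop

lemma pullPrimitive_add_smul (A : Matrix (Fin m) (Fin m) ℝ) (Φ : (Fin m → ℝ) → (Fin m → ℝ))
    (x u₁ u₂ : Fin m → ℝ) (c : ℝ) :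
    pullPrimitive A Φ x (u₁ + c • u₂) = pullPrimitive A Φ x u₁ + c * pullPrimitive A Φ x u₂ := by
  simp only [pullPrimitive, map_add, map_smul, Pi.add_apply, Pi.smul_apply, smul_eq_mul,
    Finset.mul_sum, ← Finset.sum_add_distrib]
  exact Finset.sum_congr rfl fun i _ => Finset.sum_congr rfl fun j _ => by ring

lemma fderiv_fderiv_apply_comm {E F : Type*} [NormedAddCommGroup E] [NormedSpace ℝ E]
    [NormedAddCommGroup F] [NormedSpace ℝ F] {f : E → F} (hf : ContDiff ℝ (⊤ : ℕ∞) f)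
    (x u v : E) :
    fderiv ℝ (fun y => fderiv ℝ f y v) x u = fderiv ℝ (fun y => fderiv ℝ f y u) x v := by
  have hf' : DifferentiableAt ℝ (fderiv ℝ f) x :=
    (hf.fderiv_right (m := (⊤ : ℕ∞)) (by simp)).differentiable (by simp) x
  rw [fderiv_clm_apply hf' (differentiableAt_const v),
    fderiv_clm_apply hf' (differentiableAt_const u)]
  simpa using (hf.contDiffAt.isSymmSndFDerivAt
    (by rw [minSmoothness_of_isRCLikeNormedField]; exact WithTop.coe_le_coe.2 le_top)).eq u v

lemma fderiv_pullPrimitive (A : Matrix (Fin m) (Fin m) ℝ) {Φ : (Fin m → ℝ) → (Fin m → ℝ)}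
    (hΦ : ContDiff ℝ (⊤ : ℕ∞) Φ) (x u v : Fin m → ℝ) :
    fderiv ℝ (fun y => pullPrimitive A Φ y v) x u =
      ∑ i, ∑ j, A i j * (Φ x i * fderiv ℝ (fun y => fderiv ℝ Φ y v) x u j
        + fderiv ℝ Φ x v j * fderiv ℝ Φ x u i) := by
  have hΦx := (hΦ.differentiable (by simp) x).hasFDerivAt
  have hΦ'x := ((contDiff_fderiv_const_apply hΦ v).differentiable (by simp) x).hasFDerivAt
  have hsum := HasFDerivAt.fun_sum fun i (_ : i ∈ Finset.univ) =>
    HasFDerivAt.fun_sum fun j (_ : j ∈ Finset.univ) =>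
      ((hasFDerivAt_pi'.1 hΦx i).fun_mul (hasFDerivAt_pi'.1 hΦ'x j)).const_mul (A i j)
  refine (congrArg (· u) hsum.fderiv).trans ?_
  simp [mul_add]

lemma extD1_pullPrimitive (A : Matrix (Fin m) (Fin m) ℝ) {Φ : (Fin m → ℝ) → (Fin m → ℝ)}
    (hΦ : ContDiff ℝ (⊤ : ℕ∞) Φ) : extD1 m (pullPrimitive A Φ) = pull2 m Φ (constForm A) := by
  funext x u v
  simp only [extD1, fderiv_pullPrimitive A hΦ, pull2, constForm, wedge, ← Finset.sum_sub_distrib,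
    fderiv_fderiv_apply_comm hΦ x u v]
  exact Finset.sum_congr rfl fun i _ => Finset.sum_congr rfl fun j _ => by ring

lemma extD1_fderiv {H : (Fin m → ℝ) → ℝ} (hH : ContDiff ℝ (⊤ : ℕ∞) H) (x u v : Fin m → ℝ) :
    extD1 m (fun y w => fderiv ℝ H y w) x u v = 0 :=
  sub_eq_zero.2 (fderiv_fderiv_apply_comm hH x u v)

lemma extD1_sub {β γ : Form1 m} (hβ : ∀ u, Differentiable ℝ fun x => β x u)
    (hγ : ∀ u, Differentiable ℝ fun x => γ x u) (x u v : Fin m → ℝ) :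
    extD1 m (fun y w => β y w - γ y w) x u v = extD1 m β x u v - extD1 m γ x u v := by
  simp only [extD1, fderiv_fun_sub (hβ _ x) (hγ _ x), sub_apply]
  ring

theorem sameAR2_pull2_constForm_of_exact_along {A B : Matrix (Fin m) (Fin m) ℝ}
    {Φ : (Fin m → ℝ) → (Fin m → ℝ)} {H : (Fin m → ℝ) → ℝ} {f : ℝ → (Fin m → ℝ)}
    (hΦ : ContDiff ℝ (⊤ : ℕ∞) Φ) (hH : ContDiff ℝ (⊤ : ℕ∞) H)
    (h : ∀ᶠ t in 𝓝 0, ∀ u,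
      pullPrimitive A Φ (f t) u - pullPrimitive B id (f t) u = fderiv ℝ H (f t) u) :
    SameAR2 m (pull2 m Φ (constForm A)) (constForm B) f := by
  have hA := contDiff_pullPrimitive A hΦ
  have hB := contDiff_pullPrimitive (m := m) B contDiff_id
  have hdH := contDiff_fderiv_const_apply hH
  have hdiff {β : Form1 m} (hβ : ∀ u, ContDiff ℝ (⊤ : ℕ∞) fun x => β x u) (u : Fin m → ℝ) :
      Differentiable ℝ fun x => β x u := (hβ u).differentiable (by simp)
  refine ⟨fun _ _ _ => 0, fun x u => pullPrimitive A Φ x u - pullPrimitive B id x u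
    - fderiv ℝ H x u, ⟨by simp, by simp, fun _ _ => ⟨Set.univ, univ_mem, contDiffOn_const⟩⟩,
    ⟨fun x u₁ u₂ c => ?_, fun u => ⟨Set.univ, univ_mem,
      (((hA u).sub (hB u)).sub (hdH u)).contDiffOn⟩⟩,
    .of_forall fun _ _ _ => rfl, ?_, .of_forall fun x u v => ?_⟩
  · simp only [pullPrimitive_add_smul, map_add, map_smul, smul_eq_mul]
    ring
  · filter_upwards [h] with t ht u
    exact sub_eq_zero.2 (ht u)
  · rw [extD1_sub (fun u => (hdiff hA u).fun_sub (hdiff hB u)) (hdiff hdH),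
      extD1_sub (hdiff hA) (hdiff hB), extD1_fderiv hH, extD1_pullPrimitive A hΦ,
      extD1_pullPrimitive B contDiff_id, pull2_id, sub_zero, zero_add]

end PrimitiveForms

section PolynomialMaps

open MvPolynomial

variable {m : ℕ}

/-- The map `ℝ^m → ℝ^m` whose components are the polynomials `P`. -/
def polyMap (P : Fin m → MvPolynomial (Fin m) ℝ) : (Fin m → ℝ) → (Fin m → ℝ) :=
  fun x j => eval x (P j)

lemma polyMap_X : polyMap (X : Fin m → MvPolynomial (Fin m) ℝ) = id := by
  funext x j
  exact eval_X j

lemma hasFDerivAt_eval (F : MvPolynomial (Fin m) ℝ) (x : Fin m → ℝ) :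
    HasFDerivAt (fun y => eval y F)
      (∑ k, eval x (pderiv k F) • ContinuousLinearMap.proj (R := ℝ) (φ := fun _ => ℝ) k) x := by
  induction F using MvPolynomial.induction_on with
  | C a => simpa using hasFDerivAt_const a x
  | add F G hF hG => simpa [add_smul, Finset.sum_add_distrib] using hF.fun_add hG
  | mul_X F i hF =>
    have hmul := hF.fun_mul (hasFDerivAt_apply (𝕜 := ℝ) i x)
    simp only [map_mul, eval_X]
    refine hmul.congr_fderiv ?_
    ext u
    simp [pderiv_X, Pi.single_apply, Finset.mul_sum, mul_add, Finset.sum_add_distrib,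
      apply_ite (eval x), mul_comm, mul_left_comm]

lemma contDiff_eval (F : MvPolynomial (Fin m) ℝ) :
    ContDiff ℝ (⊤ : ℕ∞) fun x : Fin m → ℝ => eval x F :=
  contDiffOn_univ.1 ((AnalyticOnNhd.eval_mvPolynomial F).contDiffOn uniqueDiffOn_univ)

lemma contDiff_polyMap (P : Fin m → MvPolynomial (Fin m) ℝ) :
    ContDiff ℝ (⊤ : ℕ∞) (polyMap P) :=
  contDiff_pi.2 fun j => contDiff_eval (P j)

lemma fderiv_polyMap_apply (P : Fin m → MvPolynomial (Fin m) ℝ) (x u : Fin m → ℝ) (j : Fin m) :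
    fderiv ℝ (polyMap P) x u j = ∑ k, eval x (pderiv k (P j)) * u k := by
  have h : HasFDerivAt (polyMap P) _ x := hasFDerivAt_pi.2 fun j => hasFDerivAt_eval (P j) x
  rw [h.fderiv]
  simp

end PolynomialMaps

section MonomialCurves

open MvPolynomial

variable {m : ℕ}

/-- The monomial curve `t ↦ (t ^ w₁, …, t ^ w_m)`. -/
def monomialCurve (w : Fin m → ℕ) : ℝ → (Fin m → ℝ) := fun t i => t ^ w i

/-- Restriction of a polynomial to the monomial curve with exponents `w`. -/
def restrict (w : Fin m → ℕ) : MvPolynomial (Fin m) ℝ →ₐ[ℝ] Polynomial ℝ :=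
  aeval fun i => Polynomial.X ^ w i

/-- The logarithmic gradient `(x_k ∂F/∂x_k)_k` along the monomial curve with exponents `w`. The
factor `x_k` makes all the components of the gradient of a monomial have the same degree, and is
harmless because it is not a zero divisor along the curve. -/
def logGrad (w : Fin m → ℕ) : MvPolynomial (Fin m) ℝ →ₗ[ℝ] Fin m → Polynomial ℝ :=
  LinearMap.pi fun k => (restrict w).toLinearMap ∘ₗ LinearMap.mulLeft ℝ (X k) ∘ₗ
    (pderiv k : Derivation ℝ _ _).toLinearMap

/-- The components, in the same logarithmic sense as `logGrad`, of the 1-form `∑ᵢⱼ Aᵢⱼ Pᵢ dPⱼ`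
along the monomial curve with exponents `w`. -/
def logPrimitive (w : Fin m → ℕ) (A : Matrix (Fin m) (Fin m) ℝ)
    (P : Fin m → MvPolynomial (Fin m) ℝ) : Fin m → Polynomial ℝ :=
  ∑ i, ∑ j, A i j • fun k => restrict w (P i) * logGrad w (P j) k

variable (w : Fin m → ℕ)

lemma restrict_X (i : Fin m) : restrict w (X i) = Polynomial.X ^ w i := aeval_X _ i

lemma eval_restrict (F : MvPolynomial (Fin m) ℝ) (t : ℝ) :
    (restrict w F).eval t = eval (monomialCurve w t) F := by
  induction F using MvPolynomial.induction_on with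
  | C a => simp [restrict]
  | add F G hF hG => simp [hF, hG]
  | mul_X F i hF => simp [hF, restrict_X, monomialCurve]

lemma logGrad_apply (F : MvPolynomial (Fin m) ℝ) (k : Fin m) :
    logGrad w F k = Polynomial.X ^ w k * restrict w (pderiv k F) := by
  simp [logGrad, restrict_X]

lemma restrict_monomial (s : Fin m →₀ ℕ) (r : ℝ) :
    restrict w (monomial s r) = Polynomial.monomial (Finsupp.weight w s) r := by
  rw [restrict, aeval_monomial, Finsupp.weight_apply, Finsupp.prod, Finsupp.sum]
  simp only [← pow_mul, Finset.prod_pow_eq_pow_sum, Polynomial.algebraMap_eq, smul_eq_mul,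
    Polynomial.C_mul_X_pow_eq_monomial, mul_comm]

lemma logGrad_monomial (s : Fin m →₀ ℕ) (r : ℝ) (k : Fin m) :
    logGrad w (monomial s r) k = Polynomial.monomial (Finsupp.weight w s) (s k * r) := by
  have h : logGrad w (monomial s r) k = restrict w (X k * pderiv k (monomial s r)) := rfl
  rw [h, X_mul_pderiv_monomial, map_nsmul, restrict_monomial, ← map_nsmul, nsmul_eq_mul]

lemma logPrimitive_apply (A : Matrix (Fin m) (Fin m) ℝ) (P : Fin m → MvPolynomial (Fin m) ℝ)
    (k : Fin m) :
    logPrimitive w A P k =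
      Polynomial.X ^ w k * restrict w (∑ i, ∑ j, A i j • (P i * pderiv k (P j))) := by
  simp only [logPrimitive, Finset.sum_apply, Pi.smul_apply, logGrad_apply, map_sum, map_smul,
    map_mul, Finset.mul_sum, mul_smul_comm, mul_left_comm]

lemma pullPrimitive_polyMap (A : Matrix (Fin m) (Fin m) ℝ) (P : Fin m → MvPolynomial (Fin m) ℝ)
    (x u : Fin m → ℝ) :
    pullPrimitive A (polyMap P) x u =
      ∑ k, eval x (∑ i, ∑ j, A i j • (P i * pderiv k (P j))) * u k := by
  simp only [pullPrimitive, fderiv_polyMap_apply, polyMap, map_sum, smul_eval, map_mul,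
    Finset.sum_mul, Finset.mul_sum]
  refine (Finset.sum_congr rfl fun i _ => Finset.sum_comm).trans (Finset.sum_comm.trans ?_)
  simp only [mul_assoc]

variable {w}

theorem sameAR2_pull2_polyMap_of_mem_range_logGrad {A B : Matrix (Fin m) (Fin m) ℝ}
    {P : Fin m → MvPolynomial (Fin m) ℝ}
    (h : logPrimitive w A P - logPrimitive w B X ∈ LinearMap.range (logGrad w)) :
    SameAR2 m (pull2 m (polyMap P) (constForm A)) (constForm B) (monomialCurve w) := by
  obtain ⟨H, hH⟩ := h
  have hrestrict (k : Fin m) : restrict w (∑ i, ∑ j, A i j • (P i * pderiv k (P j)))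
      - restrict w (∑ i, ∑ j, B i j • (X i * pderiv k (X j))) = restrict w (pderiv k H) := by
    have hk := congrFun hH k
    rw [Pi.sub_apply, logGrad_apply, logPrimitive_apply, logPrimitive_apply, ← mul_sub] at hk
    exact (mul_left_cancel₀ (pow_ne_zero _ Polynomial.X_ne_zero) hk).symm
  refine sameAR2_pull2_constForm_of_exact_along (contDiff_polyMap P) (contDiff_eval H)
    (.of_forall fun t u => ?_)
  rw [(hasFDerivAt_eval H _).fderiv, ← polyMap_X, pullPrimitive_polyMap, pullPrimitive_polyMap,
    ← Finset.sum_sub_distrib]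
  simp only [_root_.sum_apply, _root_.smul_apply, ContinuousLinearMap.proj_apply, smul_eq_mul,
    ← eval_restrict, ← hrestrict, Polynomial.eval_sub, sub_mul]

end MonomialCurves

section ExactVectors

open MvPolynomial

variable {m : ℕ} {w : Fin m → ℕ} {d : ℕ}

/-- The vector `k ↦ v_k X^d`, as a linear function of `v`. -/
def monomialVec (m d : ℕ) : (Fin m → ℝ) →ₗ[ℝ] Fin m → Polynomial ℝ :=
  LinearMap.pi fun k => Polynomial.monomial d ∘ₗ LinearMap.proj k

/-- The vectors `v` for which `v X^d` is the logarithmic gradient of a polynomial along the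
monomial curve with exponents `w`. -/
def exactVecs (w : Fin m → ℕ) (d : ℕ) : Submodule ℝ (Fin m → ℝ) :=
  (LinearMap.range (logGrad w)).comap (monomialVec m d)

lemma mem_range_logGrad_of_coeff_mem_exactVecs {v : Fin m → Polynomial ℝ}
    (h : ∀ d, (fun k => (v k).coeff d) ∈ exactVecs w d) :
    v ∈ LinearMap.range (logGrad w) := by
  obtain ⟨N, hN⟩ := Finite.exists_le fun k => (v k).natDegree
  have hv : v = ∑ d ∈ Finset.range (N + 1), monomialVec m d fun k => (v k).coeff d := by
    funext k
    simpa [monomialVec] using (v k).as_sum_range' (N + 1) (Nat.lt_succ_of_le (hN k))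
  rw [hv]
  exact Submodule.sum_mem _ fun d _ => h d

lemma mem_exactVecs_of_vecMul_eq {ι : Type*} [Fintype ι] {E : Matrix ι (Fin m) ℕ}
    (hE : E.mulVec w = fun _ => d) {c : ι → ℝ} {v : Fin m → ℝ}
    (hv : Matrix.vecMul c (E.map (Nat.cast : ℕ → ℝ)) = v) : v ∈ exactVecs w d := by
  rw [← hv, Matrix.vecMul_eq_sum]
  refine Submodule.sum_mem _ fun r _ => Submodule.smul_mem _ _
    ⟨monomial (Finsupp.equivFunOnFinite.symm (E r)) 1, ?_⟩
  have hweight : Finsupp.weight w (Finsupp.equivFunOnFinite.symm (E r)) = d := by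
    rw [← congrFun hE r, Finsupp.weight_apply, Finsupp.sum_fintype _ _ (by simp)]
    simp [Matrix.mulVec, dotProduct]
  funext k
  rw [logGrad_monomial, hweight]
  simp [monomialVec]

lemma mem_exactVecs_of_det_ne_zero {E : Matrix (Fin m) (Fin m) ℕ}
    (hE : E.mulVec w = fun _ => d) (hdet : (E.map (Nat.cast : ℕ → ℝ)).det ≠ 0) (v : Fin m → ℝ) :
    v ∈ exactVecs w d :=
  mem_exactVecs_of_vecMul_eq hE (c := Matrix.vecMul v (E.map (Nat.cast : ℕ → ℝ))⁻¹) <| by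
    rw [Matrix.vecMul_vecMul, Matrix.nonsing_inv_mul _ (Ne.isUnit hdet), Matrix.vecMul_one]

end ExactVectors

section ExactVectors4567

/-- The exponents of the curve `g4567`. -/
def weights4567 : Fin 4 → ℕ := ![4, 5, 6, 7]

lemma g4567_eq_monomialCurve : g4567 = monomialCurve weights4567 := by
  funext t i
  fin_cases i <;> rfl

lemma mem_exactVecs_of_sixteen_le {d : ℕ} (hd : 16 ≤ d) (v : Fin 4 → ℝ) :
    v ∈ exactVecs weights4567 d := by
  obtain ⟨n, r, hr, rfl⟩ : ∃ n r, r < 4 ∧ d = 4 * n + 16 + r :=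
    ⟨(d - 16) / 4, (d - 16) % 4, by lia, by lia⟩
  let E : ℕ → Matrix (Fin 4) (Fin 4) ℕ
    | 0 => !![n + 4, 0, 0, 0; n + 1, 0, 2, 0; n + 1, 1, 0, 1; n, 2, 1, 0]
    | 1 => !![n + 3, 1, 0, 0; n + 1, 0, 1, 1; n, 2, 0, 1; n, 1, 2, 0]
    | 2 => !![n + 3, 0, 1, 0; n + 2, 2, 0, 0; n, 1, 1, 1; n + 1, 0, 0, 2]
    | _ => !![n + 3, 0, 0, 1; n + 2, 1, 1, 0; n, 0, 2, 1; n, 1, 0, 2]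
  have hweight : (E r).mulVec weights4567 = fun _ => 4 * n + 16 + r := by
    funext i
    interval_cases r <;> fin_cases i <;>
      simp [E, Matrix.mulVec, dotProduct, Fin.sum_univ_four, weights4567] <;> lia
  have hdet : ((E r).map (Nat.cast : ℕ → ℝ)).det = 4 * n + 16 + r := by
    interval_cases r <;>
      simp [E, Matrix.det_succ_row_zero, Fin.sum_univ_succ, Fin.succAbove] <;> ring
  exact mem_exactVecs_of_det_ne_zero hweight (by rw [hdet]; positivity) v

variable {v : Fin 4 → ℝ}

lemma mem_exactVecs_eight (h₁ : v 1 = 0) (h₂ : v 2 = 0) (h₃ : v 3 = 0) :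
    v ∈ exactVecs weights4567 8 :=
  mem_exactVecs_of_vecMul_eq (E := !![2, 0, 0, 0]) (c := ![v 0 / 2]) (by decide) <| by
    funext k
    fin_cases k <;> simp [Matrix.vecMul, dotProduct] <;> linarith

lemma mem_exactVecs_nine (h₀₁ : v 0 = v 1) (h₂ : v 2 = 0) (h₃ : v 3 = 0) :
    v ∈ exactVecs weights4567 9 :=
  mem_exactVecs_of_vecMul_eq (E := !![1, 1, 0, 0]) (c := ![v 1]) (by decide) <| by
    funext k
    fin_cases k <;> simp [Matrix.vecMul, dotProduct] <;> linarith

lemma mem_exactVecs_ten (h₀₂ : v 0 = v 2) (h₃ : v 3 = 0) :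
    v ∈ exactVecs weights4567 10 :=
  mem_exactVecs_of_vecMul_eq (E := !![0, 2, 0, 0; 1, 0, 1, 0])
    (c := ![v 1 / 2, v 2]) (by decide) <| by
    funext k
    fin_cases k <;> simp [Matrix.vecMul, dotProduct, Fin.sum_univ_succ] <;> linarith

lemma mem_exactVecs_eleven (h₀₃ : v 0 = v 3) (h₁₂ : v 1 = v 2) :
    v ∈ exactVecs weights4567 11 :=
  mem_exactVecs_of_vecMul_eq (E := !![1, 0, 0, 1; 0, 1, 1, 0]) (c := ![v 3, v 2]) (by decide) <| by
    funext k
    fin_cases k <;> simp [Matrix.vecMul, dotProduct, Fin.sum_univ_succ] <;> linarith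

lemma mem_exactVecs_twelve (h₁₃ : v 1 = v 3) :
    v ∈ exactVecs weights4567 12 :=
  mem_exactVecs_of_vecMul_eq (E := !![3, 0, 0, 0; 0, 1, 0, 1; 0, 0, 2, 0])
    (c := ![v 0 / 3, v 3, v 2 / 2]) (by decide) <| by
    funext k
    fin_cases k <;> simp [Matrix.vecMul, dotProduct, Fin.sum_univ_succ]
    linarith

lemma mem_exactVecs_thirteen (h₀₁ : v 0 = 2 * v 1) (h₂₃ : v 2 = v 3) :
    v ∈ exactVecs weights4567 13 :=
  mem_exactVecs_of_vecMul_eq (E := !![2, 1, 0, 0; 0, 0, 1, 1]) (c := ![v 1, v 3]) (by decide) <| by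
    funext k
    fin_cases k <;> simp [Matrix.vecMul, dotProduct, Fin.sum_univ_succ] <;> linarith

lemma mem_exactVecs_fourteen (h : 2 * v 0 = 4 * v 2 + v 1) :
    v ∈ exactVecs weights4567 14 :=
  mem_exactVecs_of_vecMul_eq (E := !![2, 0, 1, 0; 1, 2, 0, 0; 0, 0, 0, 2])
    (c := ![v 2, v 1 / 2, v 3 / 2]) (by decide) <| by
    funext k
    fin_cases k <;> simp [Matrix.vecMul, dotProduct, Fin.sum_univ_succ]
    linarith

lemma mem_exactVecs_fifteen (h : v 0 = 2 * v 3 + v 2) :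
    v ∈ exactVecs weights4567 15 :=
  mem_exactVecs_of_vecMul_eq (E := !![2, 0, 0, 1; 1, 1, 1, 0; 0, 3, 0, 0])
    (c := ![v 3, v 2, (v 1 - v 2) / 3]) (by decide) <| by
    funext k
    fin_cases k <;> simp [Matrix.vecMul, dotProduct, Fin.sum_univ_succ]
    linarith

end ExactVectors4567

section CanonicalLift

open MvPolynomial

/-- The exponent vector `(n / 4 - 1, 0, 0, 0) + (unit vector of index n % 4)`; for `4 ≤ n` the
corresponding monomial restricts to `t ^ n` on the curve `g4567`. -/
def liftExponent (n : ℕ) : Fin 4 →₀ ℕ :=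
  Finsupp.single 0 (n / 4 - 1) + Finsupp.single (Fin.ofNat 4 n) 1

/-- The linear map sending `X ^ n` to the monomial with exponent `liftExponent n`. On polynomials
divisible by `X ^ 4` it is a section of the restriction to the curve `g4567`. -/
def lift4567 : Polynomial ℝ →ₗ[ℝ] MvPolynomial (Fin 4) ℝ :=
  Polynomial.lsum fun n => monomial (liftExponent n)

lemma weight_liftExponent {n : ℕ} (hn : 4 ≤ n) :
    Finsupp.weight weights4567 (liftExponent n) = n := by
  have hw (i : Fin 4) : weights4567 i = i + 4 := by fin_cases i <;> rfl
  simp only [liftExponent, map_add, Finsupp.weight_single, hw, smul_eq_mul, Fin.val_ofNat,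
    Fin.val_zero]
  lia

lemma lift4567_X_pow (i : Fin 4) : lift4567 (Polynomial.X ^ weights4567 i) = X i := by
  rw [lift4567, Polynomial.lsum_apply, Polynomial.X_pow_eq_monomial,
    Polynomial.sum_monomial_index _ _ (by simp)]
  fin_cases i <;> simp [liftExponent, weights4567, X]

variable {p : Polynomial ℝ}

lemma four_le_of_mem_support (hp : Polynomial.X ^ 4 ∣ p) {n : ℕ} (hn : n ∈ p.support) : 4 ≤ n := by
  by_contra! h
  exact Polynomial.mem_support_iff.1 hn (Polynomial.X_pow_dvd_iff.1 hp n h)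

lemma restrict_lift4567 (hp : Polynomial.X ^ 4 ∣ p) : restrict weights4567 (lift4567 p) = p := by
  conv_rhs => rw [p.as_sum_support]
  rw [lift4567, Polynomial.lsum_apply, Polynomial.sum, map_sum]
  refine Finset.sum_congr rfl fun n hn => ?_
  rw [restrict_monomial, weight_liftExponent (four_le_of_mem_support hp hn)]

lemma coeff_logGrad_lift4567 (hp : Polynomial.X ^ 4 ∣ p) (n : ℕ) (k : Fin 4) :
    (logGrad weights4567 (lift4567 p) k).coeff n = liftExponent n k * p.coeff n := by
  have hterm (d : ℕ) (hd : d ∈ p.support) :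
      (logGrad weights4567 (monomial (liftExponent d) (p.coeff d)) k).coeff n =
        if d = n then liftExponent n k * p.coeff n else 0 := by
    rw [logGrad_monomial, weight_liftExponent (four_le_of_mem_support hp hd),
      Polynomial.coeff_monomial]
    split_ifs with h <;> simp [h]
  rw [lift4567, Polynomial.lsum_apply, Polynomial.sum, map_sum, Finset.sum_apply,
    Polynomial.finsetSum_coeff, Finset.sum_congr rfl hterm, Finset.sum_ite_eq']
  split_ifs with h
  · rfl
  · simp [Polynomial.notMem_support_iff.1 h]

end CanonicalLift

section Symmetries

open MvPolynomial

variable {m : ℕ} {w : Fin m → ℕ}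

/-- Two 2-forms have diffeomorphic algebraic restrictions to the curve-germ `f`: up to the action
of a local symmetry `Φ` of `f` they have the same algebraic restriction. -/
def ARDiffeomorphic (m : ℕ) (ω₁ ω₂ : Form2 m) (f : ℝ → (Fin m → ℝ)) : Prop :=
  ∃ (Φ : (Fin m → ℝ) → (Fin m → ℝ)) (φ : ℝ → ℝ),
    IsDiffeoGerm m Φ ∧ IsDiffeoGerm1 φ ∧ (∀ᶠ t in 𝓝 (0 : ℝ), Φ (f t) = f (φ t)) ∧
    SameAR2 m (pull2 m Φ ω₁) ω₂ f

lemma isDiffeoGerm_polyMap {P : Fin m → MvPolynomial (Fin m) ℝ} (h₀ : polyMap P 0 = 0)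
    (hdet : (Matrix.of fun j k => eval 0 (pderiv k (P j))).det ≠ 0) :
    IsDiffeoGerm m (polyMap P) := by
  set J : Matrix (Fin m) (Fin m) ℝ := Matrix.of fun j k => eval 0 (pderiv k (P j))
  have hfderiv : (fderiv ℝ (polyMap P) 0 : (Fin m → ℝ) →ₗ[ℝ] (Fin m → ℝ)) = J.toLin' := by
    ext u j
    simp [fderiv_polyMap_apply, J, Matrix.mulVec, dotProduct]
  have hdet' : (fderiv ℝ (polyMap P) 0).det ≠ 0 := by
    rwa [ContinuousLinearMap.det, hfderiv, LinearMap.det_toLin']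
  exact ⟨h₀, ⟨Set.univ, univ_mem, (contDiff_polyMap P).contDiffOn⟩,
    ContinuousLinearMap.toContinuousLinearEquivOfDetNeZero _ hdet',
    ((contDiff_polyMap P).differentiable (by simp) 0).hasFDerivAt⟩

lemma isDiffeoGerm1_eval {φ : Polynomial ℝ} (h₀ : φ.coeff 0 = 0) (h₁ : φ.coeff 1 ≠ 0) :
    IsDiffeoGerm1 fun t => φ.eval t := by
  refine ⟨φ.coeff_zero_eq_eval_zero.symm.trans h₀, ⟨Set.univ, univ_mem, ?_⟩, ?_⟩
  · exact (φ.contDiff_aeval _).contDiffOn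
  · rw [Polynomial.deriv, ← Polynomial.coeff_zero_eq_eval_zero, Polynomial.coeff_derivative]
    simpa

lemma monomialCurve_zero (hw : ∀ i, w i ≠ 0) : monomialCurve w 0 = 0 :=
  funext fun i => zero_pow (hw i)

lemma polyMap_monomialCurve {P : Fin m → MvPolynomial (Fin m) ℝ} {φ : Polynomial ℝ}
    (hP : ∀ j, restrict w (P j) = φ ^ w j) (t : ℝ) :
    polyMap P (monomialCurve w t) = monomialCurve w (φ.eval t) := by
  funext j
  rw [polyMap, ← eval_restrict, hP, Polynomial.eval_pow, monomialCurve]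

lemma eval_zero_pderiv (hw : ∀ i, w i ≠ 0) (F : MvPolynomial (Fin m) ℝ) (k : Fin m) :
    eval 0 (pderiv k F) = (logGrad w F k).coeff (w k) := by
  rw [← monomialCurve_zero hw, ← eval_restrict, ← Polynomial.coeff_zero_eq_eval_zero,
    logGrad_apply, Polynomial.coeff_X_pow_mul', if_pos le_rfl, Nat.sub_self]

end Symmetries

section Symmetries4567

open MvPolynomial

/-- The lift to `ℝ^4` of the reparametrization `t ↦ φ(t)` of the curve `g4567`. -/
def symmetryLift (φ : Polynomial ℝ) : Fin 4 → MvPolynomial (Fin 4) ℝ :=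
  fun j => lift4567 (φ ^ weights4567 j)

lemma symmetryLift_X : symmetryLift Polynomial.X = X := funext lift4567_X_pow

lemma weights4567_strictMono : StrictMono weights4567 := by decide

lemma four_le_weights4567 (j : Fin 4) : 4 ≤ weights4567 j := by decide +revert

variable {φ : Polynomial ℝ}

lemma coeff_pow_self_of_X_dvd (hφ : Polynomial.X ∣ φ) (n : ℕ) :
    (φ ^ n).coeff n = φ.coeff 1 ^ n := by
  obtain ⟨u, rfl⟩ := hφ
  rw [mul_pow, Polynomial.coeff_X_pow_mul', if_pos le_rfl, Nat.sub_self,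
    Polynomial.coeff_X_mul, Polynomial.coeff_zero_eq_eval_zero, Polynomial.coeff_zero_eq_eval_zero,
    Polynomial.eval_pow]

lemma X_pow_four_dvd_pow_weights4567 (hφ : Polynomial.X ∣ φ) (j : Fin 4) :
    Polynomial.X ^ 4 ∣ φ ^ weights4567 j :=
  (pow_dvd_pow _ (four_le_weights4567 j)).trans (pow_dvd_pow_of_dvd hφ _)

lemma polyMap_symmetryLift (hφ : Polynomial.X ∣ φ) (t : ℝ) :
    polyMap (symmetryLift φ) (monomialCurve weights4567 t) =
      monomialCurve weights4567 (φ.eval t) :=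
  polyMap_monomialCurve (fun j => restrict_lift4567 (X_pow_four_dvd_pow_weights4567 hφ j)) t

lemma isDiffeoGerm_symmetryLift (hφ : Polynomial.X ∣ φ) (h₁ : φ.coeff 1 ≠ 0) :
    IsDiffeoGerm 4 (polyMap (symmetryLift φ)) := by
  have hw (i : Fin 4) : weights4567 i ≠ 0 := (four_le_weights4567 i).trans_lt' four_pos |>.ne'
  have hφ₀ : φ.eval 0 = 0 := by
    rw [← φ.coeff_zero_eq_eval_zero, Polynomial.X_dvd_iff.1 hφ]
  have hcurve := polyMap_symmetryLift hφ 0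
  rw [hφ₀, monomialCurve_zero hw] at hcurve
  refine isDiffeoGerm_polyMap hcurve ?_
  have hJ (j k : Fin 4) : eval 0 (pderiv k (symmetryLift φ j)) =
      (φ ^ weights4567 j).coeff (weights4567 k) := by
    rw [eval_zero_pderiv hw, symmetryLift,
      coeff_logGrad_lift4567 (X_pow_four_dvd_pow_weights4567 hφ j)]
    fin_cases k <;> simp [weights4567, liftExponent]
  rw [Matrix.det_of_isUpperTriangular, Finset.prod_ne_zero_iff]
  · intro j _
    rw [Matrix.of_apply, hJ, coeff_pow_self_of_X_dvd hφ]
    exact pow_ne_zero _ h₁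
  · intro j k hkj
    rw [Matrix.of_apply, hJ]
    exact Polynomial.X_pow_dvd_iff.1 (pow_dvd_pow_of_dvd hφ _) _ (weights4567_strictMono hkj)

end Symmetries4567

section PowerPairings

/-- The coefficient of `t ^ l ⊗ t ^ n` in `∑ᵢⱼ Aᵢⱼ φ ^ wᵢ ⊗ φ ^ wⱼ`, where `w = weights4567`. -/
def powerPairing (A : Matrix (Fin 4) (Fin 4) ℝ) (φ : Polynomial ℝ) (l n : ℕ) : ℝ :=
  ∑ i, ∑ j, A i j * ((φ ^ weights4567 i).coeff l * (φ ^ weights4567 j).coeff n)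

/-- The coefficient of `t ^ l ⊗ t ^ n` in `∑ᵢⱼ Aᵢⱼ φ ^ wᵢ ∧ φ ^ wⱼ`, where `w = weights4567`. -/
def powerBracket (A : Matrix (Fin 4) (Fin 4) ℝ) (φ : Polynomial ℝ) (l n : ℕ) : ℝ :=
  powerPairing A φ l n - powerPairing A φ n l

variable (A : Matrix (Fin 4) (Fin 4) ℝ) {φ : Polynomial ℝ}

lemma coeff_logPrimitive_symmetryLift (hφ : Polynomial.X ∣ φ) (d : ℕ) (k : Fin 4) :
    (logPrimitive weights4567 A (symmetryLift φ) k).coeff d =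
      ∑ ln ∈ Finset.HasAntidiagonal.antidiagonal d,
        liftExponent ln.2 k * powerPairing A φ ln.1 ln.2 := by
  have hp := X_pow_four_dvd_pow_weights4567 hφ
  simp only [logPrimitive, symmetryLift, Finset.sum_apply, Pi.smul_apply,
    Polynomial.finsetSum_coeff, Polynomial.coeff_smul, Polynomial.coeff_mul,
    restrict_lift4567 (hp _), coeff_logGrad_lift4567 (hp _), powerPairing, Finset.mul_sum,
    smul_eq_mul]
  refine (Finset.sum_congr rfl fun i _ => Finset.sum_comm).trans (Finset.sum_comm.trans ?_)
  exact Finset.sum_congr rfl fun _ _ => Finset.sum_congr rfl fun _ _ =>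
    Finset.sum_congr rfl fun _ _ => by ring

lemma powerPairing_eq_zero_left (hφ : Polynomial.X ∣ φ) {l : ℕ} (hl : l < 4) (n : ℕ) :
    powerPairing A φ l n = 0 := by
  simp [powerPairing, Polynomial.X_pow_dvd_iff.1 (X_pow_four_dvd_pow_weights4567 hφ _) l hl]

lemma powerPairing_eq_zero_right (hφ : Polynomial.X ∣ φ) (l : ℕ) {n : ℕ} (hn : n < 4) :
    powerPairing A φ l n = 0 := by
  simp [powerPairing, Polynomial.X_pow_dvd_iff.1 (X_pow_four_dvd_pow_weights4567 hφ _) n hn]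

lemma powerPairing_X (i j : Fin 4) :
    powerPairing A Polynomial.X (weights4567 i) (weights4567 j) = A i j := by
  simp [powerPairing, Polynomial.coeff_X_pow, weights4567_strictMono.injective.eq_iff]

lemma powerPairing_X_eq_zero {l n : ℕ} (h : 7 < l ∨ 7 < n) :
    powerPairing A Polynomial.X l n = 0 := by
  have hw (i : Fin 4) : weights4567 i ≤ 7 := by decide +revert
  refine Finset.sum_eq_zero fun i _ => Finset.sum_eq_zero fun j _ => ?_
  rcases h with h | h
  · simp [Polynomial.coeff_X_pow, ((hw i).trans_lt h).ne']
  · simp [Polynomial.coeff_X_pow, ((hw j).trans_lt h).ne']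

end PowerPairings

section Obstructions

lemma liftExponent_apply (n : ℕ) (k : Fin 4) :
    liftExponent n k = (if k = 0 then n / 4 - 1 else 0) + if k = Fin.ofNat 4 n then 1 else 0 := by
  simp only [liftExponent, Finsupp.add_apply, Finsupp.single_apply, eq_comm]

lemma sum_antidiagonal_eq_sum_Ico {M : Type*} [AddCommMonoid M] {f : ℕ → ℕ → M} {a : ℕ}
    (h₁ : ∀ l n, l < a → f l n = 0) (h₂ : ∀ l n, n < a → f l n = 0) (d : ℕ) :
    ∑ ln ∈ Finset.HasAntidiagonal.antidiagonal d, f ln.1 ln.2 =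
      ∑ l ∈ Finset.Ico a (d + 1 - a), f l (d - l) := by
  rw [Finset.Nat.sum_antidiagonal_eq_sum_range_succ f]
  refine (Finset.sum_subset (fun l hl => ?_) fun l hl hl' => ?_).symm
  · rw [Finset.mem_Ico] at hl
    exact Finset.mem_range.2 (by lia)
  · rw [Finset.mem_range] at hl
    rw [Finset.mem_Ico] at hl'
    rcases lt_or_ge l a with h | h
    · exact h₁ _ _ h
    · exact h₂ _ _ (by lia)

lemma sum_liftExponent_mem_exactVecs {D : ℕ → ℕ → ℝ} (hD₁ : ∀ l n, l < 4 → D l n = 0)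
    (hD₂ : ∀ l n, n < 4 → D l n = 0)
    (hsymm : ∀ i j, D (weights4567 i) (weights4567 j) = D (weights4567 j) (weights4567 i))
    (h₁₃ : 2 * (D 5 8 - D 8 5) = D 4 9 - D 9 4)
    (h₁₄ : 2 * (D 4 10 - D 10 4) = D 5 9 - D 9 5 + 4 * (D 6 8 - D 8 6))
    (h₁₅ : D 4 11 - D 11 4 = D 6 9 - D 9 6 + 2 * (D 7 8 - D 8 7)) (d : ℕ) :
    (fun k => ∑ ln ∈ Finset.HasAntidiagonal.antidiagonal d, liftExponent ln.2 k * D ln.1 ln.2) ∈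
      exactVecs weights4567 d := by
  rcases le_or_gt 16 d with hd | hd
  · exact mem_exactVecs_of_sixteen_le hd _
  have h45 : D 4 5 = D 5 4 := hsymm 0 1
  have h46 : D 4 6 = D 6 4 := hsymm 0 2
  have h47 : D 4 7 = D 7 4 := hsymm 0 3
  have h56 : D 5 6 = D 6 5 := hsymm 1 2
  have h57 : D 5 7 = D 7 5 := hsymm 1 3
  have h67 : D 6 7 = D 7 6 := hsymm 2 3
  have hsum (k : Fin 4) := sum_antidiagonal_eq_sum_Ico (f := fun l n => liftExponent n k * D l n)
    (fun l n h => by rw [hD₁ l n h, mul_zero]) (fun l n h => by rw [hD₂ l n h, mul_zero]) d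
  rw [funext hsum]
  rcases lt_or_ge d 8 with hd' | hd'
  · simp_rw [Finset.Ico_eq_empty_of_le (show d + 1 - 4 ≤ 4 by lia), Finset.sum_empty]
    exact Submodule.zero_mem _
  simp_rw [Finset.sum_Ico_eq_sum_range, liftExponent_apply]
  interval_cases d
  · apply mem_exactVecs_eight <;> simp
  · apply mem_exactVecs_nine <;> simp [Finset.sum_range_succ]
    linarith
  · apply mem_exactVecs_ten <;> simp [Finset.sum_range_succ]
    linarith
  · apply mem_exactVecs_eleven <;> simp [Finset.sum_range_succ] <;> linarith
  · apply mem_exactVecs_twelve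
    simp [Finset.sum_range_succ]
    linarith
  · apply mem_exactVecs_thirteen <;> simp [Finset.sum_range_succ] <;> linarith
  · apply mem_exactVecs_fourteen
    simp [Finset.sum_range_succ]
    linarith
  · apply mem_exactVecs_fifteen
    simp [Finset.sum_range_succ]
    linarith

end Obstructions

section Criterion

theorem arDiffeomorphic_of_powerBracket_eq {A B : Matrix (Fin 4) (Fin 4) ℝ} {φ : Polynomial ℝ}
    (hφ : Polynomial.X ∣ φ) (h₁ : φ.coeff 1 ≠ 0)
    (hB : ∀ i j, i < j → powerBracket A φ (weights4567 i) (weights4567 j) = B i j - B j i)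
    (h₁₃ : 2 * powerBracket A φ 5 8 = powerBracket A φ 4 9)
    (h₁₄ : 2 * powerBracket A φ 4 10 = powerBracket A φ 5 9 + 4 * powerBracket A φ 6 8)
    (h₁₅ : powerBracket A φ 4 11 = powerBracket A φ 6 9 + 2 * powerBracket A φ 7 8) :
    ARDiffeomorphic 4 (constForm A) (constForm B) g4567 := by
  rw [g4567_eq_monomialCurve]
  refine ⟨polyMap (symmetryLift φ), fun t => φ.eval t, isDiffeoGerm_symmetryLift hφ h₁,
    isDiffeoGerm1_eval (Polynomial.X_dvd_iff.1 hφ) h₁, .of_forall (polyMap_symmetryLift hφ),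
    sameAR2_pull2_polyMap_of_mem_range_logGrad <|
      mem_range_logGrad_of_coeff_mem_exactVecs fun d => ?_⟩
  simp only [← symmetryLift_X, Pi.sub_apply, Polynomial.coeff_sub,
    coeff_logPrimitive_symmetryLift _ hφ, coeff_logPrimitive_symmetryLift _ dvd_rfl,
    ← Finset.sum_sub_distrib, ← mul_sub]
  simp only [powerBracket] at hB h₁₃ h₁₄ h₁₅
  refine sum_liftExponent_mem_exactVecs
    (D := fun l n => powerPairing A φ l n - powerPairing B Polynomial.X l n)
    (fun l n hl => ?_) (fun l n hn => ?_) (fun i j => ?_) ?_ ?_ ?_ d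
  · rw [powerPairing_eq_zero_left A hφ hl, powerPairing_eq_zero_left B dvd_rfl hl, sub_zero]
  · rw [powerPairing_eq_zero_right A hφ l hn, powerPairing_eq_zero_right B dvd_rfl l hn, sub_zero]
  · simp only [powerPairing_X]
    rcases lt_trichotomy i j with hij | rfl | hij
    · linarith [hB i j hij]
    · rfl
    · linarith [hB j i hij]
  all_goals
    simp only [powerPairing_X_eq_zero, Nat.reduceLT, true_or, or_true, sub_zero]
    linarith

end Criterion

section PowerCoefficients

variable {R : Type*} [CommRing R] {u : Polynomial R}

lemma coeff_zero_pow (hu : u.coeff 0 = 1) (n : ℕ) : (u ^ n).coeff 0 = 1 := by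
  rw [Polynomial.coeff_zero_eq_eval_zero, Polynomial.eval_pow, ← Polynomial.coeff_zero_eq_eval_zero,
    hu, one_pow]

lemma coeff_one_pow (hu : u.coeff 0 = 1) (n : ℕ) : (u ^ n).coeff 1 = n * u.coeff 1 := by
  induction n with
  | zero => simp [Polynomial.coeff_one]
  | succ n ih =>
    simp [pow_succ, Polynomial.coeff_mul, Finset.Nat.antidiagonal_succ, ih, hu, coeff_zero_pow hu]
    ring

lemma coeff_two_pow (hu : u.coeff 0 = 1) (n : ℕ) :
    (u ^ n).coeff 2 = n * u.coeff 2 + n.choose 2 * u.coeff 1 ^ 2 := by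
  induction n with
  | zero => simp [Polynomial.coeff_one]
  | succ n ih =>
    simp [pow_succ, Polynomial.coeff_mul, Finset.Nat.antidiagonal_succ, ih, hu, coeff_zero_pow hu,
      coeff_one_pow hu, Nat.choose_succ_succ]
    ring

lemma coeff_three_pow (hu : u.coeff 0 = 1) (n : ℕ) :
    (u ^ n).coeff 3 = n * u.coeff 3 + n.choose 2 * (2 * u.coeff 1 * u.coeff 2)
      + n.choose 3 * u.coeff 1 ^ 3 := by
  induction n with
  | zero => simp [Polynomial.coeff_one]
  | succ n ih =>
    simp [pow_succ, Polynomial.coeff_mul, Finset.Nat.antidiagonal_succ, ih, hu, coeff_zero_pow hu,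
      coeff_one_pow hu, coeff_two_pow hu, Nat.choose_succ_succ]
    ring

lemma coeff_four_pow (hu : u.coeff 0 = 1) (n : ℕ) :
    (u ^ n).coeff 4 = n * u.coeff 4 + n.choose 2 * (2 * u.coeff 1 * u.coeff 3 + u.coeff 2 ^ 2)
      + n.choose 3 * (3 * u.coeff 1 ^ 2 * u.coeff 2) + n.choose 4 * u.coeff 1 ^ 4 := by
  induction n with
  | zero => simp [Polynomial.coeff_one]
  | succ n ih =>
    simp [pow_succ, Polynomial.coeff_mul, Finset.Nat.antidiagonal_succ, ih, hu, coeff_zero_pow hu,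
      coeff_one_pow hu, coeff_two_pow hu, coeff_three_pow hu, Nat.choose_succ_succ]
    ring

lemma coeff_five_pow (hu : u.coeff 0 = 1) (n : ℕ) :
    (u ^ n).coeff 5 = n * u.coeff 5 +
      n.choose 2 * (2 * u.coeff 1 * u.coeff 4 + 2 * u.coeff 2 * u.coeff 3) +
      n.choose 3 * (3 * u.coeff 1 ^ 2 * u.coeff 3 + 3 * u.coeff 1 * u.coeff 2 ^ 2) +
      n.choose 4 * (4 * u.coeff 1 ^ 3 * u.coeff 2) + n.choose 5 * u.coeff 1 ^ 5 := by
  induction n with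
  | zero => simp [Polynomial.coeff_one]
  | succ n ih =>
    simp [pow_succ, Polynomial.coeff_mul, Finset.Nat.antidiagonal_succ, ih, hu, coeff_zero_pow hu,
      coeff_one_pow hu, coeff_two_pow hu, coeff_three_pow hu, coeff_four_pow hu,
      Nat.choose_succ_succ]
    ring

end PowerCoefficients

section Reductions

open Polynomial

lemma coeff_X_mul_pow {R : Type*} [CommRing R] (u : R[X]) (k n : ℕ) :
    ((X * u) ^ k).coeff n = if k ≤ n then (u ^ k).coeff (n - k) else 0 := by
  rw [mul_pow, coeff_X_pow_mul']

lemma exists_coeff_eq {N : ℕ} (a : Fin N → ℝ) : ∃ u : ℝ[X], ∀ i : Fin N, u.coeff i = a i := by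
  classical
  exact ⟨ofFn N a, fun i => ofFn_coeff_eq_val_of_lt a i.2⟩

/-- The matrix of `dx₂ ∧ dx₃ − (3/2) dx₁ ∧ dx₄ + c₁ dx₂ ∧ dx₄ + c₂ dx₃ ∧ dx₄`. -/
def matrixI (c₁ c₂ : ℝ) : Matrix (Fin 4) (Fin 4) ℝ :=
  !![0, 0, 0, -(3 / 2); 0, 0, 1, c₁; 0, 0, 0, c₂; 0, 0, 0, 0]

/-- The matrix of `ε dx₁ ∧ dx₃ + c₁ dx₁ ∧ dx₄ + c₂ dx₂ ∧ dx₄ + c₃ dx₃ ∧ dx₄`. -/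
def matrixII (ε c₁ c₂ c₃ : ℝ) : Matrix (Fin 4) (Fin 4) ℝ :=
  !![0, 0, ε, c₁; 0, 0, 0, c₂; 0, 0, 0, c₃; 0, 0, 0, 0]

lemma constForm_matrixI (c₁ c₂ : ℝ) : constForm (matrixI c₁ c₂) = fun x u v =>
    wedge 4 1 2 x u v - 3 / 2 * wedge 4 0 3 x u v + c₁ * wedge 4 1 3 x u v
      + c₂ * wedge 4 2 3 x u v := by
  funext x u v
  simp [constForm, matrixI, Fin.sum_univ_four]
  ring

lemma constForm_matrixII (ε c₁ c₂ c₃ : ℝ) : constForm (matrixII ε c₁ c₂ c₃) = fun x u v =>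
    ε * wedge 4 0 2 x u v + c₁ * wedge 4 0 3 x u v + c₂ * wedge 4 1 3 x u v
      + c₃ * wedge 4 2 3 x u v := by
  funext x u v
  simp [constForm, matrixII, Fin.sum_univ_four]

variable {ε c₁ c₂ c₃ : ℝ} {u : ℝ[X]}

lemma arDiffeomorphic_matrixI_of_coeff (h₀ : u.coeff 0 = 1)
    (h₁ : 533 * (c₁ * u.coeff 1) = -45 * c₂)
    (h₂ : u.coeff 2 = u.coeff 1 ^ 2 - 28 / 45 * (c₁ * u.coeff 1))
    (h₃ : u.coeff 3 = 2 * u.coeff 1 * u.coeff 2 - u.coeff 1 ^ 3 - 23 * c₁ * u.coeff 1 ^ 2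
      - c₁ * u.coeff 2 - 4 * c₂ * u.coeff 1)
    (h₄ : 7 * u.coeff 4 = 14 * u.coeff 1 * u.coeff 3 + 39 * u.coeff 1 ^ 2 * u.coeff 2
      - 23 * u.coeff 1 ^ 4 - 23 * u.coeff 2 ^ 2 - 26 * c₁ * u.coeff 1 * u.coeff 2
      - 90 * c₁ * u.coeff 1 ^ 3 + 4 * c₁ * u.coeff 3 - 30 * c₂ * u.coeff 1 ^ 2
      + 2 * c₂ * u.coeff 2) :
    ARDiffeomorphic 4 (constForm (matrixI c₁ c₂)) (constForm (matrixI c₁ 0)) g4567 := by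
  refine arDiffeomorphic_of_powerBracket_eq (dvd_mul_right X u) (by simp [h₀]) ?_ ?_ ?_ ?_ <;>
    simp [Fin.forall_fin_succ, matrixI, powerBracket, powerPairing, Fin.sum_univ_four, weights4567,
      coeff_X_mul_pow, coeff_zero_pow, coeff_one_pow, coeff_two_pow, coeff_three_pow,
      coeff_four_pow, h₀, Nat.choose]
  · constructor
    · ring
    · linear_combination h₁ / 45 - 11 * h₂
  · linear_combination 45 / 2 * h₂
  · linear_combination -7 * h₃
  · linear_combination -5 / 2 * h₄

lemma arDiffeomorphic_matrixII_of_coeff (h₀ : u.coeff 0 = 1) (h₁ : u.coeff 1 = 0)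
    (h₂ : 26 * (c₁ * u.coeff 2) = -3 * c₃)
    (h₃ : 6 * (ε * u.coeff 3) = -7 * (c₁ * u.coeff 2))
    (h₄ : 4 * (ε * u.coeff 4) = 6 * ε * u.coeff 2 ^ 2 - 2 * c₁ * u.coeff 3 + c₂ * u.coeff 2)
    (h₅ : 10 * (ε * u.coeff 5) = 30 * ε * u.coeff 2 * u.coeff 3 - 5 * c₁ * u.coeff 2 ^ 2
      - 15 * c₁ * u.coeff 4 - 10 * c₂ * u.coeff 3 - 5 * c₃ * u.coeff 2) :
    ARDiffeomorphic 4 (constForm (matrixII ε c₁ c₂ c₃)) (constForm (matrixII ε c₁ c₂ 0)) g4567 := by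
  refine arDiffeomorphic_of_powerBracket_eq (dvd_mul_right X u) (by simp [h₀]) ?_ ?_ ?_ ?_ <;>
    simp [Fin.forall_fin_succ, matrixII, powerBracket, powerPairing, Fin.sum_univ_four, weights4567,
      coeff_X_mul_pow, coeff_zero_pow, coeff_one_pow, coeff_two_pow, coeff_three_pow,
      coeff_four_pow, coeff_five_pow, h₀, h₁, Nat.choose]
  · linear_combination h₂ / 3 - 2 / 3 * h₃
  · linear_combination -h₃
  · linear_combination 7 * h₄
  · linear_combination h₅

theorem arDiffeomorphic_matrixI (hc₁ : c₁ ≠ 0) (c₂ : ℝ) :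
    ARDiffeomorphic 4 (constForm (matrixI c₁ c₂)) (constForm (matrixI c₁ 0)) g4567 := by
  set a₁ := -45 / 533 * c₂ / c₁ with ha₁
  set a₂ := a₁ ^ 2 - 28 / 45 * (c₁ * a₁) with ha₂
  set a₃ := 2 * a₁ * a₂ - a₁ ^ 3 - 23 * c₁ * a₁ ^ 2 - c₁ * a₂ - 4 * c₂ * a₁ with ha₃
  set a₄ := (14 * a₁ * a₃ + 39 * a₁ ^ 2 * a₂ - 23 * a₁ ^ 4 - 23 * a₂ ^ 2 - 26 * c₁ * a₁ * a₂
    - 90 * c₁ * a₁ ^ 3 + 4 * c₁ * a₃ - 30 * c₂ * a₁ ^ 2 + 2 * c₂ * a₂) / 7 with ha₄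
  obtain ⟨u, hu⟩ := exists_coeff_eq ![1, a₁, a₂, a₃, a₄]
  have h₁ : u.coeff 1 = a₁ := hu 1
  have h₂ : u.coeff 2 = a₂ := hu 2
  have h₃ : u.coeff 3 = a₃ := hu 3
  have h₄ : u.coeff 4 = a₄ := hu 4
  apply arDiffeomorphic_matrixI_of_coeff (hu 0) <;> simp only [h₁, h₂, h₃, h₄]
  · rw [ha₁]
    field_simp
  · exact ha₂
  · exact ha₃
  · rw [ha₄]
    ring

theorem arDiffeomorphic_matrixII (hε : ε ≠ 0) (hc₁ : c₁ ≠ 0) (c₂ c₃ : ℝ) :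
    ARDiffeomorphic 4 (constForm (matrixII ε c₁ c₂ c₃)) (constForm (matrixII ε c₁ c₂ 0)) g4567 := by
  set a₂ := -3 / 26 * c₃ / c₁ with ha₂
  set a₃ := -7 / 6 * (c₁ * a₂) / ε with ha₃
  set a₄ := (6 * ε * a₂ ^ 2 - 2 * c₁ * a₃ + c₂ * a₂) / (4 * ε) with ha₄
  set a₅ := (30 * ε * a₂ * a₃ - 5 * c₁ * a₂ ^ 2 - 15 * c₁ * a₄ - 10 * c₂ * a₃ - 5 * c₃ * a₂) /
    (10 * ε) with ha₅
  obtain ⟨u, hu⟩ := exists_coeff_eq ![1, 0, a₂, a₃, a₄, a₅]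
  have h₂ : u.coeff 2 = a₂ := hu 2
  have h₃ : u.coeff 3 = a₃ := hu 3
  have h₄ : u.coeff 4 = a₄ := hu 4
  have h₅ : u.coeff 5 = a₅ := hu 5
  apply arDiffeomorphic_matrixII_of_coeff (hu 0) (hu 1) <;> simp only [h₂, h₃, h₄, h₅]
  · rw [ha₂]
    field_simp
  · rw [ha₃]
    field_simp
  · rw [ha₄]
    field_simp
  · rw [ha₅]
    field_simp

theorem algRestriction_reduction_4567_general :
    (∀ c₁ c₂ : ℝ, c₁ ≠ 0 →
      ARDiffeomorphic 4
        (fun x u v => wedge 4 1 2 x u v - (3/2) * wedge 4 0 3 x u v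
          + c₁ * wedge 4 1 3 x u v + c₂ * wedge 4 2 3 x u v)
        (fun x u v => wedge 4 1 2 x u v - (3/2) * wedge 4 0 3 x u v
          + c₁ * wedge 4 1 3 x u v)
        g4567) ∧
    (∀ ε : ℝ, ε ≠ 0 → ∀ c₁ c₂ c₃ : ℝ, c₁ ≠ 0 →
      ARDiffeomorphic 4
        (fun x u v => ε * wedge 4 0 2 x u v + c₁ * wedge 4 0 3 x u v
          + c₂ * wedge 4 1 3 x u v + c₃ * wedge 4 2 3 x u v)
        (fun x u v => ε * wedge 4 0 2 x u v + c₁ * wedge 4 0 3 x u v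
          + c₂ * wedge 4 1 3 x u v)
        g4567) := by
  constructor
  · intro c₁ c₂ hc₁
    simpa only [constForm_matrixI, zero_mul, add_zero] using arDiffeomorphic_matrixI hc₁ c₂
  · intro ε hε c₁ c₂ c₃ hc₁
    simpa only [constForm_matrixII, zero_mul, add_zero] using
      arDiffeomorphic_matrixII hε hc₁ c₂ c₃

end Reductions

/-- Lemma 4.4 (reduction of algebraic restrictions by local symmetries of
`g(t)=(t⁴,t⁵,t⁶,t⁷)`):
(i) the algebraic restriction of `dx₂∧dx₃ − (3/2)dx₁∧dx₄ + c₁dx₂∧dx₄ + c₂dx₃∧dx₄`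
(`c₁ ≠ 0`) is diffeomorphic to that of `dx₂∧dx₃ − (3/2)dx₁∧dx₄ + c₁dx₂∧dx₄`;
(ii) the algebraic restriction of `±dx₁∧dx₃ + c₁dx₁∧dx₄ + c₂dx₂∧dx₄ + c₃dx₃∧dx₄`
(`c₁ ≠ 0`) is diffeomorphic to that of `±dx₁∧dx₃ + c₁dx₁∧dx₄ + c₂dx₂∧dx₄`. -/
theorem algRestriction_reduction_4567 :
    (∀ c₁ c₂ : ℝ, c₁ ≠ 0 →
      ∃ (Φ : (Fin 4 → ℝ) → (Fin 4 → ℝ)) (φ : ℝ → ℝ),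
        IsDiffeoGerm 4 Φ ∧ IsDiffeoGerm1 φ ∧
        (∀ᶠ t in 𝓝 (0 : ℝ), Φ (g4567 t) = g4567 (φ t)) ∧
        SameAR2 4
          (pull2 4 Φ (fun x u v => wedge 4 1 2 x u v - (3/2) * wedge 4 0 3 x u v
            + c₁ * wedge 4 1 3 x u v + c₂ * wedge 4 2 3 x u v))
          (fun x u v => wedge 4 1 2 x u v - (3/2) * wedge 4 0 3 x u v
            + c₁ * wedge 4 1 3 x u v)
          g4567) ∧
    (∀ ε : ℝ, (ε = 1 ∨ ε = -1) → ∀ c₁ c₂ c₃ : ℝ, c₁ ≠ 0 →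
      ∃ (Φ : (Fin 4 → ℝ) → (Fin 4 → ℝ)) (φ : ℝ → ℝ),
        IsDiffeoGerm 4 Φ ∧ IsDiffeoGerm1 φ ∧
        (∀ᶠ t in 𝓝 (0 : ℝ), Φ (g4567 t) = g4567 (φ t)) ∧
        SameAR2 4
          (pull2 4 Φ (fun x u v => ε * wedge 4 0 2 x u v + c₁ * wedge 4 0 3 x u v
            + c₂ * wedge 4 1 3 x u v + c₃ * wedge 4 2 3 x u v))
          (fun x u v => ε * wedge 4 0 2 x u v + c₁ * wedge 4 0 3 x u v
            + c₂ * wedge 4 1 3 x u v)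
          g4567) :=
  ⟨algRestriction_reduction_4567_general.1, fun ε hε =>
    algRestriction_reduction_4567_general.2 ε (by rcases hε with rfl | rfl <;> norm_num)⟩
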